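/- arXiv:1704.07717 — 3 statements merged into one kernel-verified Lean document; each statement's English description precedes it below -/
import Mathlib

section
/- Let n be a positive integer, m>0 and p ≥ −1/(nm). If a metric measure space (X,d_X,μ_X) with σ-finite measure satisfies BBL(p/(rmp+1),m) for every r=0,1,…,n−1, then the n-fold product (Xⁿ,ρₙ,μ_{Xⁿ}) (with the product metric and the completion of the n-fold product measure) satisfies BBL(p,mn). -/
open MeasureTheory Set Metric Filter
open scoped ENNReal NNReal Topology Pointwise

noncomputable section

/-- The `d`-convex combination `(1-λ)A ⋆_d λB` of two sets. -/
def starComb {Z : Type*} (d : Z → Z → ℝ) (lam : ℝ) (A B : Set Z) : Set Z :=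
  {z | ∃ a ∈ A, ∃ b ∈ B, d z a = lam * d a b ∧ d z b = (1 - lam) * d a b}

/-- A distance is strictly intrinsic: closed balls of radii summing to the distance
between their centers intersect. -/
def StrictlyIntrinsicDist {Z : Type*} (d : Z → Z → ℝ) : Prop :=
  ∀ x y : Z, ∀ r₁ r₂ : ℝ, 0 ≤ r₁ → 0 ≤ r₂ → r₁ + r₂ = d x y →
    ∃ z : Z, d z x ≤ r₁ ∧ d z y ≤ r₂

/-- The ℓ² (Euclidean) product metric on `X × Y`. -/
def rho {X Y : Type*} [PseudoMetricSpace X] [PseudoMetricSpace Y] (a b : X × Y) : ℝ :=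
  Real.sqrt (dist a.1 b.1 ^ 2 + dist a.2 b.2 ^ 2)

/-- The ℓ² (Euclidean) metric on a finite product of copies of a metric space. -/
def rhoPi {ι : Type*} [Fintype ι] {X : Type*} [PseudoMetricSpace X] (a b : ι → X) : ℝ :=
  Real.sqrt (∑ i, dist (a i) (b i) ^ 2)

open Classical in
/-- The `p`-th mean `M_p(a,b,λ)` of `a, b ∈ [0,∞]`, for `p ∈ ℝ ∪ {±∞}`, with the
convention that it vanishes whenever `a * b = 0`. -/
def Mp (p : EReal) (lam : ℝ) (a b : ℝ≥0∞) : ℝ≥0∞ :=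
  if a = 0 ∨ b = 0 then 0
  else if p = ⊤ then max a b
  else if p = ⊥ then min a b
  else if p = 0 then a ^ (1 - lam) * b ^ lam
  else (ENNReal.ofReal (1 - lam) * a ^ p.toReal + ENNReal.ofReal lam * b ^ p.toReal) ^ (1 / p.toReal)

open Classical in
/-- The `p`-th mean `M_p(a,b,λ)` of nonnegative reals, with the zero convention. -/
def MpR (p : EReal) (lam a b : ℝ) : ℝ :=
  if a = 0 ∨ b = 0 then 0
  else if p = ⊤ then max a b
  else if p = ⊥ then min a b
  else if p = 0 then a ^ (1 - lam) * b ^ lam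
  else ((1 - lam) * a ^ p.toReal + lam * b ^ p.toReal) ^ (1 / p.toReal)

/-- `(X,d,μ)` satisfies `BM(p)`. -/
def SatisfiesBM {X : Type*} [MeasurableSpace X] (d : X → X → ℝ) (μ : Measure X)
    (p : EReal) : Prop :=
  ∀ lam : ℝ, lam ∈ Ioo (0:ℝ) 1 → ∀ A B C : Set X, A.Nonempty → B.Nonempty →
    MeasurableSet A → MeasurableSet B → MeasurableSet C →
    μ A ≠ 0 → μ B ≠ 0 → starComb d lam A B ⊆ C →
    Mp p lam (μ A) (μ B) ≤ μ C

/-- `(X,d,μ)` satisfies the general (linear) inequality `B̄M(1)`: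
`μ(C) ≥ (1-λ)μ(A) + λμ(B)` for all nonempty measurable `A, B, C` with
`C ⊇ (1-λ)A ⋆ λB`. -/
def SatisfiesBMbarLinear {X : Type*} [MeasurableSpace X] (d : X → X → ℝ)
    (μ : Measure X) : Prop :=
  ∀ lam : ℝ, lam ∈ Ioo (0:ℝ) 1 → ∀ A B C : Set X, A.Nonempty → B.Nonempty →
    MeasurableSet A → MeasurableSet B → MeasurableSet C →
    starComb d lam A B ⊆ C →
    ENNReal.ofReal (1 - lam) * μ A + ENNReal.ofReal lam * μ B ≤ μ C

/-- `(X,d,μ)` satisfies the general inequality `B̄M(p)` for a real `p > 0`: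
`μ(C) ≥ ((1-λ)μ(A)^p + λμ(B)^p)^{1/p}` for all nonempty measurable `A, B, C`
with `C ⊇ (1-λ)A ⋆ λB`. -/
def SatisfiesBMbarPos {X : Type*} [MeasurableSpace X] (d : X → X → ℝ) (μ : Measure X)
    (p : ℝ) : Prop :=
  ∀ lam : ℝ, lam ∈ Ioo (0:ℝ) 1 → ∀ A B C : Set X, A.Nonempty → B.Nonempty →
    MeasurableSet A → MeasurableSet B → MeasurableSet C →
    starComb d lam A B ⊆ C →
    (ENNReal.ofReal (1 - lam) * μ A ^ p + ENNReal.ofReal lam * μ B ^ p) ^ (1/p) ≤ μ C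

/-- `(X,d,μ)` satisfies the weighted inequality `BM(p,q)`:
`μ(C)^p ≥ (1-λ)^q μ(A)^p + λ^q μ(B)^p` for all nonempty measurable sets of positive
measure with `C ⊇ (1-λ)A ⋆ λB`. -/
def SatisfiesBMW {X : Type*} [MeasurableSpace X] (d : X → X → ℝ) (μ : Measure X)
    (p q : ℝ) : Prop :=
  ∀ lam : ℝ, lam ∈ Ioo (0:ℝ) 1 → ∀ A B C : Set X, A.Nonempty → B.Nonempty →
    MeasurableSet A → MeasurableSet B → MeasurableSet C →
    μ A ≠ 0 → μ B ≠ 0 → starComb d lam A B ⊆ C →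
    ENNReal.ofReal ((1 - lam) ^ q) * μ A ^ p + ENNReal.ofReal (lam ^ q) * μ B ^ p ≤ μ C ^ p

/-- `(X,d,μ)` satisfies the Prékopa–Leindler inequality `PL`. -/
def SatisfiesPL {X : Type*} [MeasurableSpace X] (d : X → X → ℝ) (μ : Measure X) : Prop :=
  ∀ lam : ℝ, lam ∈ Ioo (0:ℝ) 1 → ∀ f g h : X → ℝ≥0∞,
    Measurable f → Measurable g → Measurable h →
    (∀ x y z : X, d z x = lam * d x y → d z y = (1 - lam) * d x y →
      f x ^ (1 - lam) * g y ^ lam ≤ h z) →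
    (∫⁻ x, f x ∂μ) ^ (1 - lam) * (∫⁻ x, g x ∂μ) ^ lam ≤ ∫⁻ x, h x ∂μ

open Classical in
/-- `(X,d,μ)` satisfies the Borell–Brascamp–Lieb inequality `BBL(p,m)`. -/
def SatisfiesBBL {X : Type*} [MeasurableSpace X] (d : X → X → ℝ) (μ : Measure X)
    (p m : ℝ) : Prop :=
  ∀ lam : ℝ, lam ∈ Ioo (0:ℝ) 1 → ∀ f g h : X → ℝ≥0∞,
    Measurable f → Measurable g → Measurable h →
    (∀ x y z : X, d z x = lam * d x y → d z y = (1 - lam) * d x y →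
      Mp (p : EReal) lam (f x) (g y) ≤ h z) →
    Mp (if m * p + 1 = 0 then (⊥ : EReal) else ((p / (m * p + 1) : ℝ) : EReal)) lam
      (∫⁻ x, f x ∂μ) (∫⁻ x, g x ∂μ) ≤ ∫⁻ x, h x ∂μ

/-- `φ : ℝ → ℝ` is positively decreasing: `t ↦ φ(t)` and `t ↦ φ(-t)` are
non-increasing on `[0,∞)`. -/
def PositivelyDecreasing (φ : ℝ → ℝ) : Prop :=
  (∀ s t : ℝ, 0 ≤ s → s ≤ t → φ t ≤ φ s) ∧ (∀ s t : ℝ, 0 ≤ s → s ≤ t → φ (-t) ≤ φ (-s))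

/-- A set `A ⊆ ℝⁿ` is weakly unconditional. -/
def WeaklyUnconditional {n : ℕ} (A : Set (Fin n → ℝ)) : Prop :=
  ∀ x ∈ A, ∀ ε : Fin n → ℝ, (∀ i, ε i = 0 ∨ ε i = 1) → (fun i => ε i * x i) ∈ A

/-- A nonnegative function on a real vector space is `p`-concave. -/
def PConcaveFn {E : Type*} [AddCommGroup E] [Module ℝ E] (p : EReal) (φ : E → ℝ) : Prop :=
  ∀ x y : E, ∀ lam : ℝ, lam ∈ Ioo (0:ℝ) 1 →
    MpR p lam (φ x) (φ y) ≤ φ ((1 - lam) • x + lam • y)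

/-- A function on a real vector space is radially decreasing. -/
def RadiallyDecreasing {E : Type*} [AddCommGroup E] [Module ℝ E] (φ : E → ℝ) : Prop :=
  ∀ x : E, ∀ t : ℝ, t ∈ Icc (0:ℝ) 1 → φ x ≤ φ (t • x)

/-!
Tonelli reduces `BBL` on a product to its two factors. For fixed first coordinates, `BBL(p, k)` on
the second factor turns the `p`-mean inequality between `f, g, h` into a `p / (k p + 1)`-mean
inequality between their partial integrals; `BBL(p / (k p + 1), m)` on the first factor then gives
the inequality for the full integrals, because the exponent maps `p ↦ p / (m p + 1)` compose
additively in `m`. Starting from a one-point space, which satisfies `BBL(p, 0)`, adding a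
coordinate to `X^r` therefore costs exactly `BBL(p / (r m p + 1), m)` on `X`. Integrating the new
coordinate last keeps `p` fixed along the induction and meets the endpoint exponent
`-∞` only in the final step.
-/

/-- The exponent `p / (m p + 1)` of the integrals in `BBL(p, m)`, read as `-∞` at the endpoint
`p = -1/m`. -/
def bblExponent (m p : ℝ) : EReal :=
  if m * p + 1 = 0 then ⊥ else ((p / (m * p + 1) : ℝ) : EReal)

theorem bblExponent_of_ne {m p : ℝ} (h : m * p + 1 ≠ 0) :
    bblExponent m p = ((p / (m * p + 1) : ℝ) : EReal) :=
  if_neg h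

theorem bblExponent_div {k p : ℝ} (m : ℝ) (hk : k * p + 1 ≠ 0) :
    bblExponent m (p / (k * p + 1)) = bblExponent (m + k) p := by
  have denominator_eq : m * (p / (k * p + 1)) + 1 = ((m + k) * p + 1) / (k * p + 1) := by
    rw [eq_div_iff hk, add_mul, mul_assoc, div_mul_cancel₀ p hk]
    ring
  simp only [bblExponent, denominator_eq, div_eq_zero_iff, hk, or_false,
    div_div_div_cancel_right₀ hk]

theorem satisfiesBBL_iff_bblExponent {X : Type*} [MeasurableSpace X] {d : X → X → ℝ}
    {μ : Measure X} {p m : ℝ} :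
    SatisfiesBBL d μ p m ↔ ∀ lam ∈ Ioo (0 : ℝ) 1, ∀ f g h : X → ℝ≥0∞,
      Measurable f → Measurable g → Measurable h →
      (∀ x y z, d z x = lam * d x y → d z y = (1 - lam) * d x y →
        Mp (p : EReal) lam (f x) (g y) ≤ h z) →
      Mp (bblExponent m p) lam (∫⁻ x, f x ∂μ) (∫⁻ x, g x ∂μ) ≤ ∫⁻ x, h x ∂μ := by
  unfold SatisfiesBBL bblExponent
  congr!

/-- The ℓ² combination of two distance functions. Unlike `rho` it takes the distances as explicit
arguments, so that it applies to `rhoPi`, which is not the instance distance on `Fin n → X`. -/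
def l2ProdDist {X Y : Type*} (dX : X → X → ℝ) (dY : Y → Y → ℝ) (a b : X × Y) : ℝ :=
  √(dX a.1 b.1 ^ 2 + dY a.2 b.2 ^ 2)

theorem l2ProdDist_eq_mul {X Y : Type*} {dX : X → X → ℝ} {dY : Y → Y → ℝ} {c : ℝ} (hc : 0 ≤ c)
    {a b a' b' : X × Y} (hX : dX a.1 b.1 = c * dX a'.1 b'.1)
    (hY : dY a.2 b.2 = c * dY a'.2 b'.2) :
    l2ProdDist dX dY a b = c * l2ProdDist dX dY a' b' := by
  rw [l2ProdDist, l2ProdDist, hX, hY, mul_pow, mul_pow, ← mul_add, Real.sqrt_mul (sq_nonneg c),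
    Real.sqrt_sq hc]

theorem rhoPi_cons {X : Type*} [PseudoMetricSpace X] {n : ℕ} (a b : X × (Fin n → X)) :
    rhoPi (Fin.cons a.1 a.2 : Fin (n + 1) → X) (Fin.cons b.1 b.2) =
      l2ProdDist dist rhoPi a b := by
  rw [l2ProdDist, rhoPi, rhoPi, Real.sq_sqrt (by positivity), Fin.sum_univ_succ]
  simp only [Fin.cons_zero, Fin.cons_succ]

theorem measurePreserving_cons {X : Type*} [MeasurableSpace X] (μ : Measure X) [SigmaFinite μ]
    (n : ℕ) :
    MeasurePreserving (fun a : X × (Fin n → X) => (Fin.cons a.1 a.2 : Fin (n + 1) → X))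
      (μ.prod (Measure.pi fun _ : Fin n => μ)) (Measure.pi fun _ : Fin (n + 1) => μ) := by
  convert (measurePreserving_piFinSuccAbove (fun _ : Fin (n + 1) => μ) 0).symm using 1
  ext1 a
  exact (Fin.insertNth_zero' a.1 a.2).symm

theorem satisfiesBBL_dirac {X : Type*} [MeasurableSpace X] {d : X → X → ℝ} {x : X}
    (hx : d x x = 0) (p : ℝ) : SatisfiesBBL d (Measure.dirac x) p 0 := by
  rw [satisfiesBBL_iff_bblExponent]
  intro lam _ f g h hf hg hh hfgh
  rw [lintegral_dirac' x hf, lintegral_dirac' x hg, lintegral_dirac' x hh,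
    bblExponent_of_ne (by simp), zero_mul, zero_add, div_one]
  exact hfgh x x x (by simp [hx]) (by simp [hx])

namespace SatisfiesBBL

variable {X Y : Type*} [MeasurableSpace X] [MeasurableSpace Y] {dX : X → X → ℝ} {dY : Y → Y → ℝ}
  {μ : Measure X} {ν : Measure Y} {p k m : ℝ}

theorem of_measurePreserving {φ : X → Y} (hφ : MeasurePreserving φ μ ν)
    (hdist : ∀ a b, dY (φ a) (φ b) = dX a b) (hX : SatisfiesBBL dX μ p m) :
    SatisfiesBBL dY ν p m := by
  intro lam hlam f g h hf hg hh hfgh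
  rw [← hφ.lintegral_comp hf, ← hφ.lintegral_comp hg, ← hφ.lintegral_comp hh]
  refine hX lam hlam _ _ _ (hf.comp hφ.measurable) (hg.comp hφ.measurable)
    (hh.comp hφ.measurable) fun x y z hzx hzy => hfgh _ _ _ ?_ ?_
  · simpa only [hdist] using hzx
  · simpa only [hdist] using hzy

theorem prod [SFinite ν] (hk : k * p + 1 ≠ 0) (hX : SatisfiesBBL dX μ (p / (k * p + 1)) m)
    (hY : SatisfiesBBL dY ν p k) :
    SatisfiesBBL (l2ProdDist dX dY) (μ.prod ν) p (m + k) := by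
  rw [satisfiesBBL_iff_bblExponent] at hX hY ⊢
  intro lam hlam f g h hf hg hh hfgh
  have partial_integrals : ∀ x x' z, dX z x = lam * dX x x' → dX z x' = (1 - lam) * dX x x' →
      Mp ((p / (k * p + 1) : ℝ) : EReal) lam (∫⁻ y, f (x, y) ∂ν) (∫⁻ y, g (x', y) ∂ν) ≤
        ∫⁻ y, h (z, y) ∂ν := by
    intro x x' z hzx hzx'
    rw [← bblExponent_of_ne hk]
    refine hY lam hlam _ _ _ (hf.comp measurable_prodMk_left) (hg.comp measurable_prodMk_left)
      (hh.comp measurable_prodMk_left) fun y y' w hwy hwy' => ?_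
    exact hfgh (x, y) (x', y') (z, w) (l2ProdDist_eq_mul hlam.1.le hzx hwy)
      (l2ProdDist_eq_mul (sub_nonneg.2 hlam.2.le) hzx' hwy')
  rw [lintegral_prod _ hf.aemeasurable, lintegral_prod _ hg.aemeasurable,
    lintegral_prod _ hh.aemeasurable, ← bblExponent_div m hk]
  exact hX lam hlam _ _ _ hf.lintegral_prod_right' hg.lintegral_prod_right'
    hh.lintegral_prod_right' partial_integrals

theorem pi_succ {X : Type*} [PseudoMetricSpace X] [MeasurableSpace X] {μ : Measure X}
    [SigmaFinite μ] {n : ℕ} (hk : k * p + 1 ≠ 0)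
    (hX : SatisfiesBBL (dist : X → X → ℝ) μ (p / (k * p + 1)) m)
    (hpi : SatisfiesBBL (rhoPi : (Fin n → X) → (Fin n → X) → ℝ)
      (Measure.pi fun _ : Fin n => μ) p k) :
    SatisfiesBBL (rhoPi : (Fin (n + 1) → X) → (Fin (n + 1) → X) → ℝ)
      (Measure.pi fun _ : Fin (n + 1) => μ) p (m + k) :=
  (hX.prod hk hpi).of_measurePreserving (measurePreserving_cons μ n) rhoPi_cons

end SatisfiesBBL

theorem statement10_general {X : Type*} [PseudoMetricSpace X] [MeasurableSpace X]
    (μ : Measure X) [SigmaFinite μ] (n : ℕ) (m p : ℝ) (hp : 0 ≤ n * m * p + 1)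
    (hX : ∀ r : ℕ, r < n → SatisfiesBBL (dist : X → X → ℝ) μ (p / ((r : ℝ) * m * p + 1)) m) :
    SatisfiesBBL (rhoPi : (Fin n → X) → (Fin n → X) → ℝ)
      (Measure.pi fun _ : Fin n => μ) p (m * n) := by
  induction n with
  | zero =>
    rw [Measure.pi_of_empty _ isEmptyElim, Nat.cast_zero, mul_zero]
    exact satisfiesBBL_dirac (by simp [rhoPi]) p
  | succ n ih =>
    have denominator_pos : 0 < n * m * p + 1 := by
      push_cast at hp
      by_contra! hneg
      nlinarith [n.cast_nonneg (α := ℝ)]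
    have hpi := ih denominator_pos.le fun r hr => hX r (hr.trans n.lt_succ_self)
    have hnew := hX n n.lt_succ_self
    rw [mul_comm (n : ℝ) m] at denominator_pos hnew
    rw [Nat.cast_succ, mul_add_one, add_comm (m * n : ℝ)]
    exact hnew.pi_succ denominator_pos.ne' hpi

/-- Corollary `c:ndimBBL`: if `X` satisfies `BBL(p/(rmp+1), m)` for all
`r = 0, 1, …, n-1`, then the `n`-fold product `Xⁿ` (with the ℓ² product metric and the
product measure) satisfies `BBL(p, mn)`. -/
theorem statement10 {X : Type*} [MetricSpace X] [MeasurableSpace X] [OpensMeasurableSpace X]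
    (μ : Measure X) [SigmaFinite μ]
    (hd : StrictlyIntrinsicDist (dist : X → X → ℝ))
    (n : ℕ) (hn : 0 < n) (m p : ℝ) (hm : 0 < m) (hp : -1/(n * m) ≤ p)
    (hX : ∀ r : ℕ, r < n → SatisfiesBBL (dist : X → X → ℝ) μ (p / ((r : ℝ) * m * p + 1)) m) :
    SatisfiesBBL (rhoPi : (Fin n → X) → (Fin n → X) → ℝ)
      (Measure.pi fun _ : Fin n => μ) p (m * n) :=
  statement10_general μ n m p (by rw [div_le_iff₀ (by positivity)] at hp; linarith) hX

end
end

section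
/- Let (X,d_X,μ_X) and (Y,d_Y,μ_Y) be metric measure spaces with σ-finite measures which both satisfy PL. Then (X×Y,ρ,μ_{X×Y}) also satisfies PL. -/
open MeasureTheory Set Metric Filter
open scoped ENNReal NNReal Topology Pointwise

noncomputable section

theorem mem_starComb_singleton {Z : Type*} {d : Z → Z → ℝ} {lam : ℝ} {x y z : Z} :
    z ∈ starComb d lam {x} {y} ↔ d z x = lam * d x y ∧ d z y = (1 - lam) * d x y := by
  simp only [starComb, mem_singleton_iff, exists_eq_left, mem_ofPred_eq]

section Rho

variable {X Y : Type*} [PseudoMetricSpace X] [PseudoMetricSpace Y]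

theorem rho_eq_mul_rho {t : ℝ} (ht : 0 ≤ t) {p q p' q' : X × Y}
    (hfst : dist p.1 q.1 = t * dist p'.1 q'.1) (hsnd : dist p.2 q.2 = t * dist p'.2 q'.2) :
    rho p q = t * rho p' q' := by
  simp only [rho]
  rw [hfst, hsnd, mul_pow, mul_pow, ← mul_add, Real.sqrt_mul (sq_nonneg t), Real.sqrt_sq ht]

theorem starComb_prod_subset_starComb_rho {lam : ℝ} (hlam : lam ∈ Icc (0 : ℝ) 1)
    (A B : Set X) (A' B' : Set Y) :
    starComb dist lam A B ×ˢ starComb dist lam A' B' ⊆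
      starComb rho lam (A ×ˢ A') (B ×ˢ B') := by
  rintro ⟨z, z'⟩ ⟨⟨a, ha, b, hb, hza, hzb⟩, ⟨a', ha', b', hb', hza', hzb'⟩⟩
  exact ⟨(a, a'), ⟨ha, ha'⟩, (b, b'), ⟨hb, hb'⟩,
    rho_eq_mul_rho hlam.1 hza hza', rho_eq_mul_rho (sub_nonneg.2 hlam.2) hzb hzb'⟩

end Rho

-- By Tonelli, the integrals over `X × Y` are integrals over `X` of fibre integrals; `PL` on `Y`,
-- applied fibrewise, says exactly that the fibre integrals satisfy the hypothesis of `PL` on `X`.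
theorem SatisfiesPL.prod {X Y : Type*} [MeasurableSpace X] [MeasurableSpace Y]
    {dX : X → X → ℝ} {dY : Y → Y → ℝ} {d : X × Y → X × Y → ℝ}
    {μX : Measure X} {μY : Measure Y} [SFinite μY]
    (hX : SatisfiesPL dX μX) (hY : SatisfiesPL dY μY)
    (hd : ∀ lam ∈ Ioo (0 : ℝ) 1, ∀ (A B : Set X) (A' B' : Set Y),
      starComb dX lam A B ×ˢ starComb dY lam A' B' ⊆ starComb d lam (A ×ˢ A') (B ×ˢ B')) :
    SatisfiesPL d (μX.prod μY) := by
  intro lam hlam f g h hf hg hh hfgh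
  have fibre_le (x y z : X) (hzx : dX z x = lam * dX x y) (hzy : dX z y = (1 - lam) * dX x y) :
      (∫⁻ v, f (x, v) ∂μY) ^ (1 - lam) * (∫⁻ v, g (y, v) ∂μY) ^ lam ≤ ∫⁻ v, h (z, v) ∂μY := by
    refine hY lam hlam _ _ _ (hf.comp measurable_prodMk_left) (hg.comp measurable_prodMk_left)
      (hh.comp measurable_prodMk_left) fun x' y' z' hzx' hzy' ↦ ?_
    have hmem : (z, z') ∈ starComb d lam ({x} ×ˢ {x'}) ({y} ×ˢ {y'}) :=
      hd lam hlam _ _ _ _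
        ⟨mem_starComb_singleton.2 ⟨hzx, hzy⟩, mem_starComb_singleton.2 ⟨hzx', hzy'⟩⟩
    rw [singleton_prod_singleton, singleton_prod_singleton, mem_starComb_singleton] at hmem
    exact hfgh _ _ _ hmem.1 hmem.2
  rw [lintegral_prod _ hf.aemeasurable, lintegral_prod _ hg.aemeasurable,
    lintegral_prod _ hh.aemeasurable]
  exact hX lam hlam _ _ _ hf.lintegral_prod_right' hg.lintegral_prod_right'
    hh.lintegral_prod_right' fibre_le

theorem statement11_general {X Y : Type*} [PseudoMetricSpace X] [PseudoMetricSpace Y]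
    [MeasurableSpace X] [MeasurableSpace Y] (μX : Measure X) (μY : Measure Y) [SFinite μY]
    (hX : SatisfiesPL (dist : X → X → ℝ) μX) (hY : SatisfiesPL (dist : Y → Y → ℝ) μY) :
    SatisfiesPL (rho : X × Y → X × Y → ℝ) (μX.prod μY) :=
  hX.prod hY fun _ hlam ↦ starComb_prod_subset_starComb_rho (Ioo_subset_Icc_self hlam)

/-- the product of two metric measure spaces satisfying the
Prékopa–Leindler inequality also satisfies it. -/
theorem statement11 {X Y : Type*} [MetricSpace X] [MetricSpace Y]
    [MeasurableSpace X] [OpensMeasurableSpace X] [MeasurableSpace Y] [OpensMeasurableSpace Y]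
    (μX : Measure X) (μY : Measure Y) [SigmaFinite μX] [SigmaFinite μY]
    (hdX : StrictlyIntrinsicDist (dist : X → X → ℝ))
    (hdY : StrictlyIntrinsicDist (dist : Y → Y → ℝ))
    (hX : SatisfiesPL (dist : X → X → ℝ) μX)
    (hY : SatisfiesPL (dist : Y → Y → ℝ) μY) :
    SatisfiesPL (rho : X × Y → X × Y → ℝ) (μX.prod μY) :=
  statement11_general μX μY hX hY

end
end

section
/- Let μ₁ be the measure on ℝ given by dμ₁(x)=φ₁(x)dx with φ₁:ℝ→[0,∞) positively decreasing, and let μ₂ be the measure on ℝ^{n−1} given by dμ₂(x)=φ₂(x)dx with φ₂:ℝ^{n−1}→[0,∞) a q-concave function for some −1/(n−1) ≤ q ≤ ∞. Let μ = μ₁×μ₂ on ℝⁿ = ℝ×ℝ^{n−1}. Let λ∈(0,1) and let A,B⊆ℝⁿ be non-empty measurable sets such that (1−λ)A+λB is also measurable and μ₂(A(0)) = sup_{x∈ℝ} μ₂(A(x)) = sup_{x∈ℝ} μ₂(B(x)) = μ₂(B(0)). Then μ((1−λ)A+λB) ≥ (1−λ)μ(A) + λμ(B). -/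
open MeasureTheory Set Metric Filter
open scoped ENNReal NNReal Topology Pointwise

noncomputable section

/-!
Let `f` and `g` be the functions sending `x` to the `μ₂`-measure of the section of `A`, resp. `B`,
over `x`. If `μ₂` is quasi-concave, the section of `(1 - λ)A + λB` over `(1 - λ)x + λy` has measure
at least `min (f x) (g y)`, so that each superlevel set of its section function contains the
combination of those of `f` and `g`. Below the common supremum `f 0 = g 0` these contain `0`, where
the density of `μ₁` is maximal, and slicing that density by height as well reduces the linear
inequality for `μ₁` to the one-dimensional Brunn–Minkowski inequality for nonempty sets. Integrating
over the levels gives the theorem.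

That a `q`-concave density on `ℝⁿ` with `q ≥ -1/n` defines a quasi-concave measure is due to Borell.
After reduction to `q = -1/n`, the one-dimensional case again follows from the linear inequality,
once `f` and `g` are rescaled to have equal suprema, and the general case is an induction on `n`.
-/

section OneDimensionalBrunnMinkowski

lemma volume_add_volume_le_of_isCompact {K L : Set ℝ} (hK : IsCompact K) (hL : IsCompact L)
    (hKne : K.Nonempty) (hLne : L.Nonempty) : volume K + volume L ≤ volume (K + L) := by
  obtain ⟨M, hMK, hM⟩ := hK.exists_isGreatest hKne
  obtain ⟨l, hlL, hl⟩ := hL.exists_isLeast hLne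
  have h_overlap : volume ((· + l) '' K ∩ (M + ·) '' L) = 0 := by
    refine measure_mono_null (t := {M + l}) ?_ (measure_singleton _)
    rintro _ ⟨⟨x, hx, rfl⟩, y, hy, hxy⟩
    have hxM := hM hx
    have hly := hl hy
    simp only [mem_singleton_iff] at hxy ⊢
    linarith
  calc volume K + volume L
      = volume ((· + l) '' K) + volume ((M + ·) '' L) := by
        rw [image_add_right, measure_preimage_add_right, image_add_left, measure_preimage_add]
    _ = volume ((· + l) '' K ∪ (M + ·) '' L) :=
        (measure_union₀ (hL.image (by fun_prop)).measurableSet.nullMeasurableSet h_overlap).symm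
    _ ≤ volume (K + L) := by
        refine measure_mono (union_subset ?_ ?_)
        · rintro _ ⟨x, hx, rfl⟩
          exact add_mem_add hx hlL
        · rintro _ ⟨y, hy, rfl⟩
          exact add_mem_add hMK hy

lemma volume_add_volume_le {S T : Set ℝ} (hS : MeasurableSet S) (hT : MeasurableSet T)
    (hSne : S.Nonempty) (hTne : T.Nonempty) : volume S + volume T ≤ volume (S + T) := by
  obtain ⟨x, hx⟩ := hSne
  obtain ⟨y, hy⟩ := hTne
  rw [hS.measure_eq_iSup_isCompact, hT.measure_eq_iSup_isCompact]
  simp only [iSup_and']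
  refine ENNReal.biSup_add_biSup_le' ⟨∅, empty_subset S, isCompact_empty⟩
    ⟨∅, empty_subset T, isCompact_empty⟩ fun K hK L hL => ?_
  calc volume K + volume L
      ≤ volume (insert x K) + volume (insert y L) := by gcongr <;> exact subset_insert _ _
    _ ≤ volume (insert x K + insert y L) :=
        volume_add_volume_le_of_isCompact (hK.2.insert x) (hL.2.insert y) (insert_nonempty x K)
          (insert_nonempty y L)
    _ ≤ volume (S + T) := by
        gcongr
        exacts [insert_subset hx hK.1, insert_subset hy hL.1]

lemma ofReal_mul_volume_add_le {lam : ℝ} (hlam : lam ∈ Ioo (0 : ℝ) 1) {S T : Set ℝ}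
    (hS : MeasurableSet S) (hT : MeasurableSet T) (hSne : S.Nonempty) (hTne : T.Nonempty) :
    ENNReal.ofReal (1 - lam) * volume S + ENNReal.ofReal lam * volume T
      ≤ volume ((1 - lam) • S + lam • T) := by
  have h1 : 0 < 1 - lam := sub_pos.2 hlam.2
  have h := volume_add_volume_le (hS.const_smul₀ (1 - lam)) (hT.const_smul₀ lam) hSne.smul_set
    hTne.smul_set
  simpa [Measure.addHaar_smul, abs_of_pos h1, abs_of_pos hlam.1] using h

end OneDimensionalBrunnMinkowski

section LayerCake

variable {α : Type*} [MeasurableSpace α]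

lemma volume_restrict_Ioi_setOf_ofReal_lt (a : ℝ≥0∞) :
    volume.restrict (Ioi 0) {t : ℝ | ENNReal.ofReal t < a} = a := by
  rw [Measure.restrict_apply (measurableSet_lt (by fun_prop) measurable_const)]
  induction a with
  | top => simp
  | coe r =>
    have : {t : ℝ | ENNReal.ofReal t < r} ∩ Ioi 0 = Ioo 0 (r : ℝ) := by
      ext t
      simp only [mem_inter_iff, mem_ofPred_eq, mem_Ioi, mem_Ioo, and_comm (a := _ < (r : ℝ≥0∞))]
      refine and_congr_right fun ht => ?_
      rw [← ENNReal.ofReal_coe_nnreal, ENNReal.ofReal_lt_ofReal_iff_of_nonneg ht.le]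
    simp [this]

lemma lintegral_eq_lintegral_measure_ofReal_lt (μ : Measure α) [SFinite μ] {f : α → ℝ≥0∞}
    (hf : Measurable f) :
    ∫⁻ x, f x ∂μ = ∫⁻ t in Ioi (0 : ℝ), μ {x | ENNReal.ofReal t < f x} := by
  have h_subgraph : MeasurableSet {p : α × ℝ | ENNReal.ofReal p.2 < f p.1} :=
    measurableSet_lt (by fun_prop) (by fun_prop)
  calc ∫⁻ x, f x ∂μ
      = ∫⁻ x, volume.restrict (Ioi (0 : ℝ)) {t | ENNReal.ofReal t < f x} ∂μ := by
        simp only [volume_restrict_Ioi_setOf_ofReal_lt]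
    _ = μ.prod (volume.restrict (Ioi 0)) {p | ENNReal.ofReal p.2 < f p.1} :=
        (Measure.prod_apply h_subgraph).symm
    _ = ∫⁻ t in Ioi (0 : ℝ), μ {x | ENNReal.ofReal t < f x} := Measure.prod_apply_symm h_subgraph

lemma mul_lintegral_add_mul_lintegral_le {μ ν ρ : Measure α} [SFinite μ] [SFinite ν] [SFinite ρ]
    {f g h : α → ℝ≥0∞} (hf : Measurable f) (hg : Measurable g) (hh : Measurable h) (a b : ℝ≥0∞)
    (hlt : ∀ t, a * μ {x | t < f x} + b * ν {x | t < g x} ≤ ρ {x | t < h x}) :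
    a * ∫⁻ x, f x ∂μ + b * ∫⁻ x, g x ∂ν ≤ ∫⁻ x, h x ∂ρ := by
  have h_meas (σ : Measure α) (u : α → ℝ≥0∞) :
      Measurable fun t : ℝ => σ {x | ENNReal.ofReal t < u x} :=
    Antitone.measurable fun s t hst =>
      measure_mono fun x hx => (ENNReal.ofReal_le_ofReal hst).trans_lt hx
  rw [lintegral_eq_lintegral_measure_ofReal_lt μ hf, lintegral_eq_lintegral_measure_ofReal_lt ν hg,
    lintegral_eq_lintegral_measure_ofReal_lt ρ hh, ← lintegral_const_mul _ (h_meas μ f),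
    ← lintegral_const_mul _ (h_meas ν g), ← lintegral_add_left ((h_meas μ f).const_mul a)]
  exact lintegral_mono fun t => hlt _

end LayerCake

section LinearInequality

variable {lam : ℝ}

lemma ofReal_mul_lintegral_add_le {E : Type*} [AddCommGroup E] [Module ℝ E] [MeasurableSpace E]
    {ν : Measure E} [SFinite ν] {f g h : E → ℝ≥0∞} (hf : Measurable f) (hg : Measurable g)
    (hh : Measurable h) (hmin : ∀ x y, min (f x) (g y) ≤ h ((1 - lam) • x + lam • y))
    (hsup : ⨆ x, f x = ⨆ x, g x)
    (hν : ∀ t < ⨆ x, f x, ENNReal.ofReal (1 - lam) * ν {x | t < f x}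
      + ENNReal.ofReal lam * ν {x | t < g x}
      ≤ ν ((1 - lam) • {x | t < f x} + lam • {x | t < g x})) :
    ENNReal.ofReal (1 - lam) * ∫⁻ x, f x ∂ν + ENNReal.ofReal lam * ∫⁻ x, g x ∂ν
      ≤ ∫⁻ x, h x ∂ν := by
  refine mul_lintegral_add_mul_lintegral_le hf hg hh _ _ fun t => ?_
  by_cases ht : t < ⨆ x, f x
  · refine (hν t ht).trans (measure_mono ?_)
    rintro _ ⟨_, ⟨x, hx, rfl⟩, _, ⟨y, hy, rfl⟩, rfl⟩
    exact (lt_min hx hy).trans_le (hmin x y)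
  · have hf_le (x : E) : f x ≤ t := (le_iSup f x).trans (not_lt.1 ht)
    have hg_le (x : E) : g x ≤ t := (le_iSup g x).trans (hsup ▸ not_lt.1 ht)
    simp [(hf_le _).not_gt, (hg_le _).not_gt]

lemma ofReal_mul_lintegral_volume_add_le (hlam : lam ∈ Ioo (0 : ℝ) 1) {f g h : ℝ → ℝ≥0∞}
    (hf : Measurable f) (hg : Measurable g) (hh : Measurable h)
    (hmin : ∀ x y, min (f x) (g y) ≤ h ((1 - lam) • x + lam • y)) (hsup : ⨆ x, f x = ⨆ x, g x) :
    ENNReal.ofReal (1 - lam) * (∫⁻ x, f x) + ENNReal.ofReal lam * (∫⁻ x, g x) ≤ ∫⁻ x, h x :=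
  ofReal_mul_lintegral_add_le hf hg hh hmin hsup fun _ ht =>
    ofReal_mul_volume_add_le hlam (measurableSet_lt measurable_const hf)
      (measurableSet_lt measurable_const hg) (lt_iSup_iff.1 ht)
      (lt_iSup_iff.1 (ht.trans_eq hsup))

lemma PositivelyDecreasing.quasiconcaveOn {φ : ℝ → ℝ} (hφ : PositivelyDecreasing φ) :
    QuasiconcaveOn ℝ univ φ := by
  refine fun r => OrdConnected.convex ⟨?_⟩
  rintro x ⟨-, hx⟩ y ⟨-, hy⟩ z ⟨hxz, hzy⟩
  refine ⟨mem_univ z, ?_⟩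
  rcases le_total 0 z with hz | hz
  · exact hy.trans (hφ.1 z y hz hzy)
  · have := hφ.2 (-z) (-x) (neg_nonneg.2 hz) (neg_le_neg hxz)
    rw [neg_neg, neg_neg] at this
    exact hx.trans this

lemma PositivelyDecreasing.le_zero {φ : ℝ → ℝ} (hφ : PositivelyDecreasing φ) (x : ℝ) :
    φ x ≤ φ 0 := by
  rcases le_total 0 x with hx | hx
  · exact hφ.1 0 x le_rfl hx
  · simpa using hφ.2 0 (-x) le_rfl (neg_nonneg.2 hx)

lemma ofReal_mul_withDensity_add_le (hlam : lam ∈ Ioo (0 : ℝ) 1) {ψ : ℝ → ℝ≥0∞}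
    (hψ : QuasiconcaveOn ℝ univ ψ) {x₀ : ℝ} (hmax : ∀ x, ψ x ≤ ψ x₀) {S T : Set ℝ}
    (hS : MeasurableSet S) (hT : MeasurableSet T) (hxS : x₀ ∈ S) (hxT : x₀ ∈ T) :
    ENNReal.ofReal (1 - lam) * volume.withDensity ψ S
      + ENNReal.ofReal lam * volume.withDensity ψ T
      ≤ volume.withDensity ψ ((1 - lam) • S + lam • T) := by
  have h_convex (t : ℝ≥0∞) : Convex ℝ {x | t < ψ x} := by simpa using hψ.convex_gt t
  have h_meas (t : ℝ≥0∞) : MeasurableSet {x | t < ψ x} := (h_convex t).ordConnected.measurableSet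
  have hψ_meas : Measurable ψ := measurable_of_Ioi h_meas
  simp only [withDensity_apply']
  refine mul_lintegral_add_mul_lintegral_le hψ_meas hψ_meas hψ_meas _ _ fun t => ?_
  simp only [Measure.restrict_apply (h_meas t)]
  by_cases ht : t < ψ x₀
  · refine (ofReal_mul_volume_add_le hlam ((h_meas t).inter hS) ((h_meas t).inter hT)
      ⟨x₀, ht, hxS⟩ ⟨x₀, ht, hxT⟩).trans (measure_mono (subset_inter ?_ ?_))
    · rintro _ ⟨_, ⟨x, hx, rfl⟩, _, ⟨y, hy, rfl⟩, rfl⟩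
      exact h_convex t hx.1 hy.1 (sub_pos.2 hlam.2).le hlam.1.le (sub_add_cancel _ _)
    · gcongr <;> exact inter_subset_right
  · have h_le (x : ℝ) : ψ x ≤ t := (hmax x).trans (not_lt.1 ht)
    simp [(h_le _).not_gt]

end LinearInequality

section PowerMeans

variable {lam a b : ℝ}

-- Divide by the right-hand side and apply the weighted AM-GM inequality to both quotients.
lemma prod_rpow_add_prod_rpow_le {ι : Type*} {s : Finset ι} {w x y : ι → ℝ}
    (hw : ∀ i ∈ s, 0 < w i) (hw1 : ∑ i ∈ s, w i = 1) (hx : ∀ i ∈ s, 0 ≤ x i)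
    (hy : ∀ i ∈ s, 0 ≤ y i) :
    ∏ i ∈ s, x i ^ w i + ∏ i ∈ s, y i ^ w i ≤ ∏ i ∈ s, (x i + y i) ^ w i := by
  by_cases h0 : ∃ i ∈ s, x i + y i = 0
  · obtain ⟨i, hi, hxy⟩ := h0
    obtain ⟨hxi, hyi⟩ := (add_eq_zero_iff_of_nonneg (hx i hi) (hy i hi)).1 hxy
    rw [Finset.prod_eq_zero hi (by rw [hxi, Real.zero_rpow (hw i hi).ne']),
      Finset.prod_eq_zero hi (by rw [hyi, Real.zero_rpow (hw i hi).ne']),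
      Finset.prod_eq_zero hi (by rw [hxy, Real.zero_rpow (hw i hi).ne']), add_zero]
  push Not at h0
  have hxy (i) (hi : i ∈ s) : 0 < x i + y i := (add_nonneg (hx i hi) (hy i hi)).lt_of_ne' (h0 i hi)
  have h_amgm (u : ι → ℝ) (hu : ∀ i ∈ s, 0 ≤ u i) :
      (∏ i ∈ s, u i ^ w i) / ∏ i ∈ s, (x i + y i) ^ w i ≤ ∑ i ∈ s, w i * (u i / (x i + y i)) := by
    rw [← Finset.prod_div_distrib,
      Finset.prod_congr rfl fun i hi => (Real.div_rpow (hu i hi) (hxy i hi).le (w i)).symm]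
    exact Real.geom_mean_le_arith_mean_weighted s w _ (fun i hi => (hw i hi).le) hw1
      fun i hi => div_nonneg (hu i hi) (hxy i hi).le
  have h_sum : ∑ i ∈ s, w i * (x i / (x i + y i)) + ∑ i ∈ s, w i * (y i / (x i + y i)) = 1 := by
    rw [← Finset.sum_add_distrib, ← hw1]
    refine Finset.sum_congr rfl fun i hi => ?_
    rw [← mul_add, ← add_div, div_self (h0 i hi), mul_one]
  have h_pos : 0 < ∏ i ∈ s, (x i + y i) ^ w i :=
    Finset.prod_pos fun i hi => Real.rpow_pos_of_pos (hxy i hi) _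
  rw [← div_le_one h_pos, add_div]
  exact (add_le_add (h_amgm x hx) (h_amgm y hy)).trans_eq h_sum

lemma prod_rpow_inv_card_add_le {ι : Type*} [Fintype ι] [Nonempty ι] {x y : ι → ℝ}
    (hx : ∀ i, 0 ≤ x i) (hy : ∀ i, 0 ≤ y i) :
    (∏ i, x i) ^ (Fintype.card ι : ℝ)⁻¹ + (∏ i, y i) ^ (Fintype.card ι : ℝ)⁻¹
      ≤ (∏ i, (x i + y i)) ^ (Fintype.card ι : ℝ)⁻¹ := by
  rw [← Real.finsetProd_rpow _ _ fun i _ => hx i, ← Real.finsetProd_rpow _ _ fun i _ => hy i,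
    ← Real.finsetProd_rpow _ _ fun i _ => add_nonneg (hx i) (hy i)]
  exact prod_rpow_add_prod_rpow_le (fun i _ => by positivity) (by simp) (fun i _ => hx i)
    fun i _ => hy i

lemma MpR_coe {p : ℝ} (hp : p ≠ 0) (ha : 0 < a) (hb : 0 < b) :
    MpR p lam a b = ((1 - lam) * a ^ p + lam * b ^ p) ^ (1 / p) := by
  simp [MpR, ha.ne', hb.ne', hp]

lemma rpow_geomMean_le (hlam : lam ∈ Ioo (0 : ℝ) 1) (p : ℝ) (ha : 0 < a) (hb : 0 < b) :
    (a ^ (1 - lam) * b ^ lam) ^ p ≤ (1 - lam) * a ^ p + lam * b ^ p := by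
  have h_amgm := Real.geom_mean_le_arith_mean2_weighted (sub_pos.2 hlam.2).le hlam.1.le
    (Real.rpow_nonneg ha.le p) (Real.rpow_nonneg hb.le p) (sub_add_cancel 1 lam)
  rwa [← Real.rpow_mul ha.le, ← Real.rpow_mul hb.le, mul_comm p, mul_comm p, Real.rpow_mul ha.le,
    Real.rpow_mul hb.le, ← Real.mul_rpow (by positivity) (by positivity)] at h_amgm

lemma MpR_le_geomMean (hlam : lam ∈ Ioo (0 : ℝ) 1) {p : ℝ} (hp : p < 0) (ha : 0 < a)
    (hb : 0 < b) : MpR p lam a b ≤ a ^ (1 - lam) * b ^ lam := by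
  rw [MpR_coe hp.ne ha hb]
  calc ((1 - lam) * a ^ p + lam * b ^ p) ^ (1 / p)
      ≤ ((a ^ (1 - lam) * b ^ lam) ^ p) ^ (1 / p) :=
        Real.rpow_le_rpow_of_nonpos (by positivity) (rpow_geomMean_le hlam p ha hb)
          (one_div_nonpos.2 hp.le)
    _ = a ^ (1 - lam) * b ^ lam := by
        rw [← Real.rpow_mul (by positivity), mul_one_div_cancel hp.ne, Real.rpow_one]

lemma geomMean_le_MpR (hlam : lam ∈ Ioo (0 : ℝ) 1) {p : ℝ} (hp : 0 < p) (ha : 0 < a)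
    (hb : 0 < b) : a ^ (1 - lam) * b ^ lam ≤ MpR p lam a b := by
  rw [MpR_coe hp.ne' ha hb]
  calc a ^ (1 - lam) * b ^ lam
      = ((a ^ (1 - lam) * b ^ lam) ^ p) ^ (1 / p) := by
        rw [← Real.rpow_mul (by positivity), mul_one_div_cancel hp.ne', Real.rpow_one]
    _ ≤ ((1 - lam) * a ^ p + lam * b ^ p) ^ (1 / p) :=
        Real.rpow_le_rpow (by positivity) (rpow_geomMean_le hlam p ha hb) (by positivity)

lemma geomMean_le_max (hlam : lam ∈ Ioo (0 : ℝ) 1) (ha : 0 < a) (hb : 0 < b) :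
    a ^ (1 - lam) * b ^ lam ≤ max a b := by
  have h1 : 0 < 1 - lam := sub_pos.2 hlam.2
  calc a ^ (1 - lam) * b ^ lam
      ≤ max a b ^ (1 - lam) * max a b ^ lam :=
        mul_le_mul (Real.rpow_le_rpow ha.le (le_max_left a b) h1.le)
          (Real.rpow_le_rpow hb.le (le_max_right a b) hlam.1.le) (by positivity) (by positivity)
    _ = max a b := by
        rw [← Real.rpow_add (lt_max_of_lt_left ha), sub_add_cancel, Real.rpow_one]

lemma MpR_le_MpR_of_neg (hlam : lam ∈ Ioo (0 : ℝ) 1) {p q : ℝ} (hpq : p ≤ q) (hq : q < 0)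
    (ha : 0 < a) (hb : 0 < b) : MpR p lam a b ≤ MpR q lam a b := by
  have hp : p < 0 := hpq.trans_lt hq
  have h1 : 0 < 1 - lam := sub_pos.2 hlam.2
  have hlam0 : 0 < lam := hlam.1
  have h_jensen :
      ((1 - lam) * a ^ q + lam * b ^ q) ^ (p / q) ≤ (1 - lam) * a ^ p + lam * b ^ p := by
    have h := (convexOn_rpow ((one_le_div_of_neg hq).2 hpq)).2
      (mem_Ici.2 (Real.rpow_nonneg ha.le q)) (mem_Ici.2 (Real.rpow_nonneg hb.le q)) h1.le hlam0.le
      (sub_add_cancel 1 lam)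
    simpa only [smul_eq_mul, ← Real.rpow_mul ha.le, ← Real.rpow_mul hb.le,
      mul_div_cancel₀ p hq.ne] using h
  rw [MpR_coe hp.ne ha hb, MpR_coe hq.ne ha hb]
  calc ((1 - lam) * a ^ p + lam * b ^ p) ^ (1 / p)
      ≤ (((1 - lam) * a ^ q + lam * b ^ q) ^ (p / q)) ^ (1 / p) :=
        Real.rpow_le_rpow_of_nonpos (by positivity) h_jensen (one_div_nonpos.2 hp.le)
    _ = ((1 - lam) * a ^ q + lam * b ^ q) ^ (1 / q) := by
        rw [← Real.rpow_mul (by positivity), div_mul_div_comm, mul_one, mul_comm q,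
          div_mul_cancel_left₀ hp.ne, one_div]

lemma MpR_coe_le_MpR (hlam : lam ∈ Ioo (0 : ℝ) 1) {p : ℝ} (hp : p < 0) {q : EReal}
    (hpq : (p : EReal) ≤ q) (ha : 0 < a) (hb : 0 < b) : MpR p lam a b ≤ MpR q lam a b := by
  have h_geom := MpR_le_geomMean hlam hp ha hb
  induction q with
  | bot => simp at hpq
  | top => simpa [MpR, ha.ne', hb.ne'] using h_geom.trans (geomMean_le_max hlam ha hb)
  | coe q =>
    rcases lt_trichotomy q 0 with hq | rfl | hq
    · exact MpR_le_MpR_of_neg hlam (EReal.coe_le_coe_iff.1 hpq) hq ha hb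
    · simpa [MpR, ha.ne', hb.ne'] using h_geom
    · exact h_geom.trans (geomMean_le_MpR hlam hq ha hb)

end PowerMeans

section DualMean

variable {lam : ℝ}

/-- The inequality `M_p(a, b, λ) ≤ e` for `p = -1 / card ι`, which for finite positive `a` and `b`
is equivalent to the following one. It is stated in this dual form, without powers, so that it can
be passed to integrals one coordinate at a time. For empty `ι` it says `min a b ≤ e`, that is,
`p = -∞`. -/
def DualMeanLE (ι : Type*) [Fintype ι] (lam : ℝ) (a b e : ℝ≥0∞) : Prop :=
  ∀ c d : ι → ℝ≥0, min ((∏ i, (c i : ℝ≥0∞)) * a) ((∏ i, (d i : ℝ≥0∞)) * b)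
    ≤ (∏ i, (ENNReal.ofReal (1 - lam) * c i + ENNReal.ofReal lam * d i)) * e

lemma DualMeanLE.min_le {ι : Type*} [Fintype ι] [IsEmpty ι] {a b e : ℝ≥0∞}
    (h : DualMeanLE ι lam a b e) : min a b ≤ e := by
  simpa using h 0 0

lemma DualMeanLE.mul {n : ℕ} {a b e : ℝ≥0∞} (h : DualMeanLE (Fin (n + 1)) lam a b e)
    (c d : ℝ≥0) : DualMeanLE (Fin n) lam (c * a) (d * b)
      ((ENNReal.ofReal (1 - lam) * c + ENNReal.ofReal lam * d) * e) := by
  intro c' d'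
  simpa [Fin.prod_univ_succ, mul_assoc, mul_left_comm] using h (Fin.cons c c') (Fin.cons d d')

lemma mul_prod_rpow_inv_card_add_le {ι : Type*} [Fintype ι] [Nonempty ι] {v w : ℝ} (hv : 0 ≤ v)
    (hw : 0 ≤ w) {x y : ι → ℝ} (hx : ∀ i, 0 ≤ x i) (hy : ∀ i, 0 ≤ y i) :
    v * (∏ i, x i) ^ (Fintype.card ι : ℝ)⁻¹ + w * (∏ i, y i) ^ (Fintype.card ι : ℝ)⁻¹
      ≤ (∏ i, (v * x i + w * y i)) ^ (Fintype.card ι : ℝ)⁻¹ := by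
  have h_homog {u : ℝ} (hu : 0 ≤ u) {z : ι → ℝ} (hz : ∀ i, 0 ≤ z i) :
      u * (∏ i, z i) ^ (Fintype.card ι : ℝ)⁻¹ = (∏ i, u * z i) ^ (Fintype.card ι : ℝ)⁻¹ := by
    rw [Finset.prod_mul_distrib, Finset.prod_const, Finset.card_univ,
      Real.mul_rpow (by positivity) (Finset.prod_nonneg fun i _ => hz i),
      Real.pow_rpow_inv_natCast hu Fintype.card_ne_zero]
  rw [h_homog hv hx, h_homog hw hy]
  exact prod_rpow_inv_card_add_le (fun i => mul_nonneg hv (hx i)) fun i => mul_nonneg hw (hy i)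

lemma rpow_mul_rpow_neg_le {t a P r : ℝ} (ht : 0 ≤ t) (ha : 0 < a) (hr : 0 ≤ r)
    (h : t ≤ P * a) : t ^ r * a ^ (-r) ≤ P ^ r := by
  rw [Real.rpow_neg ha.le, ← div_eq_mul_inv, ← Real.div_rpow ht ha.le]
  exact Real.rpow_le_rpow (by positivity) ((div_le_iff₀ ha).2 h) hr

lemma min_mul_le_mul_MpR (hlam : lam ∈ Ioo (0 : ℝ) 1) {a b C D E r : ℝ} (ha : 0 < a) (hb : 0 < b)
    (hC : 0 ≤ C) (hD : 0 ≤ D) (hE : 0 ≤ E) (hr : 0 < r)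
    (h : (1 - lam) * C ^ r + lam * D ^ r ≤ E ^ r) :
    min (C * a) (D * b) ≤ E * MpR (-r : ℝ) lam a b := by
  have h1 : 0 < 1 - lam := sub_pos.2 hlam.2
  have hlam0 : 0 < lam := hlam.1
  set t := min (C * a) (D * b)
  set s := (1 - lam) * a ^ (-r) + lam * b ^ (-r)
  have ht : 0 ≤ t := by positivity
  have hs : 0 < s := by positivity
  have h_root : t ^ r * s ≤ E ^ r :=
    calc t ^ r * s = (1 - lam) * (t ^ r * a ^ (-r)) + lam * (t ^ r * b ^ (-r)) := by ring
      _ ≤ (1 - lam) * C ^ r + lam * D ^ r := by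
          gcongr
          exacts [rpow_mul_rpow_neg_le ht ha hr.le (min_le_left _ _),
            rpow_mul_rpow_neg_le ht hb hr.le (min_le_right _ _)]
      _ ≤ E ^ r := h
  calc t = (t ^ r) ^ r⁻¹ := (Real.rpow_rpow_inv ht hr.ne').symm
    _ ≤ (E ^ r * s⁻¹) ^ r⁻¹ := by
        gcongr
        exact (le_mul_inv_iff₀ hs).2 h_root
    _ = E * s ^ (1 / -r) := by
        rw [Real.mul_rpow (by positivity) (by positivity), Real.rpow_rpow_inv hE hr.ne',
          Real.inv_rpow hs.le, one_div, inv_neg, Real.rpow_neg hs.le]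
    _ = E * MpR (-r : ℝ) lam a b := by rw [MpR_coe (neg_ne_zero.2 hr.ne') ha hb]

lemma min_prod_mul_le_prod_mul_MpR {ι : Type*} [Fintype ι] [Nonempty ι]
    (hlam : lam ∈ Ioo (0 : ℝ) 1) {a b : ℝ} (ha : 0 < a) (hb : 0 < b) {c d : ι → ℝ}
    (hc : ∀ i, 0 ≤ c i) (hd : ∀ i, 0 ≤ d i) :
    min ((∏ i, c i) * a) ((∏ i, d i) * b)
      ≤ (∏ i, ((1 - lam) * c i + lam * d i)) * MpR (-1 / Fintype.card ι : ℝ) lam a b := by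
  have h1 : 0 ≤ 1 - lam := sub_nonneg.2 hlam.2.le
  rw [neg_div, one_div]
  exact min_mul_le_mul_MpR hlam ha hb (Finset.prod_nonneg fun i _ => hc i)
    (Finset.prod_nonneg fun i _ => hd i)
    (Finset.prod_nonneg fun i _ => add_nonneg (mul_nonneg h1 (hc i)) (mul_nonneg hlam.1.le (hd i)))
    (by positivity) (mul_prod_rpow_inv_card_add_le h1 hlam.1.le hc hd)

lemma DualMeanLE.of_MpR_le {ι : Type*} [Fintype ι] [Nonempty ι] (hlam : lam ∈ Ioo (0 : ℝ) 1)
    {q : EReal} (hq : ((-1 / Fintype.card ι : ℝ) : EReal) ≤ q) {a b e : ℝ}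
    (hMp : MpR q lam a b ≤ e) :
    DualMeanLE ι lam (ENNReal.ofReal a) (ENNReal.ofReal b) (ENNReal.ofReal e) := by
  intro c d
  rcases le_or_gt a 0 with ha | ha
  · simp [ENNReal.ofReal_of_nonpos ha]
  rcases le_or_gt b 0 with hb | hb
  · simp [ENNReal.ofReal_of_nonpos hb]
  have hp : (-1 / Fintype.card ι : ℝ) < 0 :=
    div_neg_of_neg_of_pos (by norm_num) (by exact_mod_cast Fintype.card_pos)
  have h1 : 0 ≤ 1 - lam := sub_nonneg.2 hlam.2.le
  have hlam0 : 0 ≤ lam := hlam.1.le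
  have h_comb_nonneg (i : ι) : 0 ≤ (1 - lam) * c i + lam * d i := by positivity
  have h_prod_nonneg : 0 ≤ ∏ i, ((1 - lam) * c i + lam * d i) :=
    Finset.prod_nonneg fun i _ => h_comb_nonneg i
  have h_real : min ((∏ i, (c i : ℝ)) * a) ((∏ i, (d i : ℝ)) * b)
      ≤ (∏ i, ((1 - lam) * c i + lam * d i)) * e :=
    (min_prod_mul_le_prod_mul_MpR hlam ha hb (fun i => (c i).coe_nonneg)
      fun i => (d i).coe_nonneg).trans (mul_le_mul_of_nonneg_left
        ((MpR_coe_le_MpR hlam hp hq ha hb).trans hMp) h_prod_nonneg)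
  have h_ofReal_prod (x : ι → ℝ≥0) :
      ENNReal.ofReal (∏ i, (x i : ℝ)) = ∏ i, (x i : ℝ≥0∞) := by
    simp [ENNReal.ofReal_prod_of_nonneg]
  have h_ofReal_comb : ENNReal.ofReal (∏ i, ((1 - lam) * c i + lam * d i))
      = ∏ i, (ENNReal.ofReal (1 - lam) * c i + ENNReal.ofReal lam * d i) := by
    rw [ENNReal.ofReal_prod_of_nonneg fun i _ => h_comb_nonneg i]
    refine Finset.prod_congr rfl fun i _ => ?_
    rw [ENNReal.ofReal_add (by positivity) (by positivity), ENNReal.ofReal_mul h1,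
      ENNReal.ofReal_mul hlam0, ENNReal.ofReal_coe_nnreal, ENNReal.ofReal_coe_nnreal]
  rw [← h_ofReal_prod, ← h_ofReal_prod, ← h_ofReal_comb, ← ENNReal.ofReal_mul' ha.le,
    ← ENNReal.ofReal_mul' hb.le, ← ENNReal.ofReal_min, ← ENNReal.ofReal_mul h_prod_nonneg]
  exact ENNReal.ofReal_le_ofReal h_real

end DualMean

section BorellBrascampLieb

variable {lam : ℝ}

lemma tendsto_lintegral_min_natCast {α : Type*} [MeasurableSpace α] (μ : Measure α)
    {f : α → ℝ≥0∞} (hf : Measurable f) :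
    Tendsto (fun n : ℕ => ∫⁻ x, min (f x) n ∂μ) atTop (𝓝 (∫⁻ x, f x ∂μ)) := by
  refine lintegral_tendsto_of_tendsto_of_monotone
    (fun n => (hf.min measurable_const).aemeasurable)
    (ae_of_all _ fun x m n hmn => min_le_min le_rfl (by exact_mod_cast hmn))
    (ae_of_all _ fun x => ?_)
  simpa using (tendsto_const_nhds (x := f x)).min ENNReal.tendsto_nat_nhds_top

-- Multiplying `f` by `⨆ g` and `g` by `⨆ f` makes the suprema of the two functions equal.
lemma min_lintegral_le_of_iSup_ne_top (hlam : lam ∈ Ioo (0 : ℝ) 1) {f g h : ℝ → ℝ≥0∞}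
    (hf : Measurable f) (hg : Measurable g) (hh : Measurable h) (hf_top : ⨆ x, f x ≠ ⊤)
    (hg_top : ⨆ x, g x ≠ ⊤)
    (hfgh : ∀ (x y : ℝ) (c d : ℝ≥0), min (c * f x) (d * g y)
      ≤ (ENNReal.ofReal (1 - lam) * c + ENNReal.ofReal lam * d) * h ((1 - lam) • x + lam • y)) :
    min (∫⁻ x, f x) (∫⁻ x, g x) ≤ ∫⁻ x, h x := by
  lift ⨆ x, f x to ℝ≥0 using hf_top with d hd
  lift ⨆ x, g x to ℝ≥0 using hg_top with c hc
  have h_sup : ⨆ x, (c : ℝ≥0∞) * f x = ⨆ x, (d : ℝ≥0∞) * g x := by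
    rw [← ENNReal.mul_iSup, ← ENNReal.mul_iSup, ← hc, ← hd, mul_comm]
  rcases eq_or_ne c 0 with rfl | hc0
  · have hg0 : g = 0 := by simpa [funext_iff, eq_comm] using hc
    simp [hg0]
  set w := ENNReal.ofReal (1 - lam) * c + ENNReal.ofReal lam * d with hw
  have hw0 : w ≠ 0 := by simp [hw, hlam.2, hc0]
  have hw_top : w ≠ ⊤ := by finiteness
  have h_lin := ofReal_mul_lintegral_volume_add_le hlam (hf.const_mul (c : ℝ≥0∞))
    (hg.const_mul (d : ℝ≥0∞)) (hh.const_mul w) (fun x y => hfgh x y c d) h_sup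
  rw [lintegral_const_mul _ hf, lintegral_const_mul _ hg, lintegral_const_mul _ hh] at h_lin
  refine (ENNReal.mul_le_mul_iff_right hw0 hw_top).1 (le_trans ?_ h_lin)
  rw [hw, add_mul, mul_assoc, mul_assoc]
  gcongr
  exacts [min_le_left _ _, min_le_right _ _]

lemma min_lintegral_le_of_min_mul_le (hlam : lam ∈ Ioo (0 : ℝ) 1) {f g h : ℝ → ℝ≥0∞}
    (hf : Measurable f) (hg : Measurable g) (hh : Measurable h)
    (hfgh : ∀ (x y : ℝ) (c d : ℝ≥0), min (c * f x) (d * g y)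
      ≤ (ENNReal.ofReal (1 - lam) * c + ENNReal.ofReal lam * d) * h ((1 - lam) • x + lam • y)) :
    min (∫⁻ x, f x) (∫⁻ x, g x) ≤ ∫⁻ x, h x := by
  refine le_of_tendsto' ((tendsto_lintegral_min_natCast volume hf).min
    (tendsto_lintegral_min_natCast volume hg)) fun n => ?_
  have h_top (u : ℝ → ℝ≥0∞) : ⨆ x, min (u x) n ≠ ⊤ :=
    ne_top_of_le_ne_top (ENNReal.natCast_ne_top n) (iSup_le fun x => min_le_right _ _)
  refine min_lintegral_le_of_iSup_ne_top hlam (hf.min measurable_const) (hg.min measurable_const)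
    hh (h_top f) (h_top g) fun x y c d => le_trans ?_ (hfgh x y c d)
  gcongr <;> exact min_le_left _ _

lemma measurable_finCons {n : ℕ} :
    Measurable fun p : ℝ × (Fin n → ℝ) => (Fin.cons p.1 p.2 : Fin (n + 1) → ℝ) := by
  refine measurable_pi_iff.2 (Fin.cases ?_ fun i => ?_)
  · simpa using measurable_fst
  · simp only [Fin.cons_succ]
    fun_prop

lemma lintegral_eq_lintegral_lintegral_finCons {n : ℕ} {f : (Fin (n + 1) → ℝ) → ℝ≥0∞}
    (hf : Measurable f) :
    ∫⁻ x, f x = ∫⁻ t : ℝ, ∫⁻ y : Fin n → ℝ, f (Fin.cons t y) := by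
  rw [← (volume_preserving_piFinSuccAbove (fun _ : Fin (n + 1) => ℝ) 0).symm.lintegral_comp hf,
    Measure.volume_eq_prod, lintegral_prod _ (by fun_prop)]
  simp [MeasurableEquiv.piFinSuccAbove, Fin.insertNthEquiv]

theorem min_lintegral_le_of_dualMeanLE (hlam : lam ∈ Ioo (0 : ℝ) 1) {n : ℕ}
    {f g h : (Fin n → ℝ) → ℝ≥0∞} (hf : Measurable f) (hg : Measurable g) (hh : Measurable h)
    (hfgh : ∀ x y, DualMeanLE (Fin n) lam (f x) (g y) (h ((1 - lam) • x + lam • y))) :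
    min (∫⁻ x, f x) (∫⁻ x, g x) ≤ ∫⁻ x, h x := by
  induction n with
  | zero =>
    simpa [volume_pi, Measure.pi_of_empty _ (0 : Fin 0 → ℝ)] using (hfgh 0 0).min_le
  | succ n ih =>
    have h_slice {u : (Fin (n + 1) → ℝ) → ℝ≥0∞} (hu : Measurable u) (t : ℝ) :
        Measurable fun y : Fin n → ℝ => u (Fin.cons t y) :=
      hu.comp (measurable_finCons.comp measurable_prodMk_left)
    rw [lintegral_eq_lintegral_lintegral_finCons hf, lintegral_eq_lintegral_lintegral_finCons hg,
      lintegral_eq_lintegral_lintegral_finCons hh]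
    refine min_lintegral_le_of_min_mul_le hlam (hf.comp measurable_finCons).lintegral_prod_right'
      (hg.comp measurable_finCons).lintegral_prod_right'
      (hh.comp measurable_finCons).lintegral_prod_right' fun s t c d => ?_
    rw [← lintegral_const_mul _ (h_slice hf s), ← lintegral_const_mul _ (h_slice hg t),
      ← lintegral_const_mul _ (h_slice hh _)]
    refine ih ((h_slice hf s).const_mul _) ((h_slice hg t).const_mul _)
      ((h_slice hh _).const_mul _) fun x y => ?_
    have h_cons : (1 - lam) • (Fin.cons s x : Fin (n + 1) → ℝ) + lam • (Fin.cons t y)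
        = Fin.cons ((1 - lam) • s + lam • t) ((1 - lam) • x + lam • y) := by
      ext i
      cases i using Fin.cases <;> simp
    simpa only [h_cons] using (hfgh (Fin.cons s x) (Fin.cons t y)).mul c d

end BorellBrascampLieb

section QuasiConcaveMeasure

/-- Quasi-concave measures, called convex or `-∞`-concave by Borell. The Minkowski combination
of two measurable sets need not be measurable; `μ` is then its outer measure. -/
def QuasiConcaveMeasure {E : Type*} [AddCommGroup E] [Module ℝ E] [MeasurableSpace E]
    (μ : Measure E) : Prop :=
  ∀ lam ∈ Ioo (0 : ℝ) 1, ∀ A B : Set E, MeasurableSet A → MeasurableSet B →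
    min (μ A) (μ B) ≤ μ ((1 - lam) • A + lam • B)

theorem PConcaveFn.quasiConcaveMeasure {n : ℕ} (hn : 0 < n) {φ : (Fin n → ℝ) → ℝ}
    {q : EReal} (hφ : PConcaveFn q φ) (hφ_meas : Measurable φ) (hq : ((-1 / n : ℝ) : EReal) ≤ q) :
    QuasiConcaveMeasure (volume.withDensity fun x => ENNReal.ofReal (φ x)) := by
  intro lam hlam A B hA hB
  set μ := (volume : Measure (Fin n → ℝ)).withDensity fun x => ENNReal.ofReal (φ x)
  set C := toMeasurable μ ((1 - lam) • A + lam • B)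
  have hC : MeasurableSet C := measurableSet_toMeasurable _ _
  have hμ {S : Set (Fin n → ℝ)} (hS : MeasurableSet S) :
      μ S = ∫⁻ x, S.indicator (fun x => ENNReal.ofReal (φ x)) x := by
    rw [withDensity_apply _ hS, lintegral_indicator hS]
  rw [← measure_toMeasurable ((1 - lam) • A + lam • B), hμ hA, hμ hB, hμ hC]
  refine min_lintegral_le_of_dualMeanLE hlam (hφ_meas.ennreal_ofReal.indicator hA)
    (hφ_meas.ennreal_ofReal.indicator hB) (hφ_meas.ennreal_ofReal.indicator hC) fun x y => ?_
  by_cases hx : x ∈ A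
  swap
  · simp [DualMeanLE, hx]
  by_cases hy : y ∈ B
  swap
  · simp [DualMeanLE, hy]
  have hxy : (1 - lam) • x + lam • y ∈ C :=
    subset_toMeasurable _ _ (add_mem_add (smul_mem_smul_set hx) (smul_mem_smul_set hy))
  rw [indicator_of_mem hx, indicator_of_mem hy, indicator_of_mem hxy]
  have : Nonempty (Fin n) := ⟨0, hn⟩
  exact .of_MpR_le hlam (by simpa using hq) (hφ x y lam hlam)

end QuasiConcaveMeasure

theorem statement14_general {E : Type*} [AddCommGroup E] [Module ℝ E] [MeasurableSpace E]
    {φ : ℝ → ℝ} (hφ : PositivelyDecreasing φ) {μ : Measure E} [SFinite μ]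
    (hμ : QuasiConcaveMeasure μ) {lam : ℝ} (hlam : lam ∈ Ioo (0 : ℝ) 1) {A B : Set (ℝ × E)}
    (hA : MeasurableSet A) (hB : MeasurableSet B)
    (hsecA : μ {y | ((0 : ℝ), y) ∈ A} = ⨆ x : ℝ, μ {y | (x, y) ∈ A})
    (hsupAB : (⨆ x : ℝ, μ {y | (x, y) ∈ A}) = ⨆ x : ℝ, μ {y | (x, y) ∈ B})
    (hsecB : (⨆ x : ℝ, μ {y | (x, y) ∈ B}) = μ {y | ((0 : ℝ), y) ∈ B}) :
    let ν := (volume.withDensity fun x => ENNReal.ofReal (φ x)).prod μ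
    ENNReal.ofReal (1 - lam) * ν A + ENNReal.ofReal lam * ν B ≤ ν ((1 - lam) • A + lam • B) := by
  intro ν
  set C := toMeasurable ν ((1 - lam) • A + lam • B)
  have hC : MeasurableSet C := measurableSet_toMeasurable _ _
  have h_sections (x y : ℝ) :
      min (μ (Prod.mk x ⁻¹' A)) (μ (Prod.mk y ⁻¹' B))
        ≤ μ (Prod.mk ((1 - lam) • x + lam • y) ⁻¹' C) := by
    refine (hμ lam hlam _ _ (measurable_prodMk_left hA) (measurable_prodMk_left hB)).trans
      (measure_mono ?_)
    rintro _ ⟨_, ⟨u, hu, rfl⟩, _, ⟨v, hv, rfl⟩, rfl⟩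
    exact subset_toMeasurable _ _ (Set.add_mem_add (smul_mem_smul_set (mem_preimage.1 hu))
      (smul_mem_smul_set (mem_preimage.1 hv)))
  have hφ_quasi : QuasiconcaveOn ℝ univ fun x => ENNReal.ofReal (φ x) :=
    hφ.quasiconcaveOn.monotone_comp (g := ENNReal.ofReal) ENNReal.ofReal_mono
  have hfA := measurable_measure_prodMk_left (ν := μ) hA
  have hfB := measurable_measure_prodMk_left (ν := μ) hB
  rw [← measure_toMeasurable ((1 - lam) • A + lam • B), Measure.prod_apply hA,
    Measure.prod_apply hB, Measure.prod_apply hC]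
  exact ofReal_mul_lintegral_add_le hfA hfB (measurable_measure_prodMk_left hC) h_sections hsupAB
    fun t ht => ofReal_mul_withDensity_add_le hlam hφ_quasi (x₀ := 0)
      (fun x => ENNReal.ofReal_le_ofReal (hφ.le_zero x)) (measurableSet_lt measurable_const hfA)
      (measurableSet_lt measurable_const hfB) (ht.trans_eq hsecA.symm)
      (ht.trans_eq (hsupAB.trans hsecB))

/-- Theorem `t:BM_lineal_med_1`: linear Brunn–Minkowski inequality on
`ℝ × ℝ^{n-1}` for the product of a measure with positively decreasing density on `ℝ` and a
measure with `q`-concave density on `ℝ^{n-1}`, when both sets attain their (common) maximal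
section at the central section. Here `m = n - 1`. -/
theorem statement14 {m : ℕ} (hm : 0 < m)
    (φ₁ : ℝ → ℝ) (hφ₁0 : ∀ x, 0 ≤ φ₁ x) (hφ₁meas : Measurable φ₁)
    (hφ₁dec : PositivelyDecreasing φ₁)
    (φ₂ : (Fin m → ℝ) → ℝ) (hφ₂0 : ∀ x, 0 ≤ φ₂ x) (hφ₂meas : Measurable φ₂)
    (q : EReal) (hq : ((-1/(m:ℝ) : ℝ) : EReal) ≤ q) (hφ₂conc : PConcaveFn q φ₂)
    (μ₁ : Measure ℝ) (hμ₁ : μ₁ = (volume : Measure ℝ).withDensity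
      fun x => ENNReal.ofReal (φ₁ x))
    (μ₂ : Measure (Fin m → ℝ)) (hμ₂ : μ₂ = (volume : Measure (Fin m → ℝ)).withDensity
      fun x => ENNReal.ofReal (φ₂ x))
    (lam : ℝ) (hlam : lam ∈ Ioo (0:ℝ) 1)
    (A B : Set (ℝ × (Fin m → ℝ))) (hA : A.Nonempty) (hB : B.Nonempty)
    (hAm : MeasurableSet A) (hBm : MeasurableSet B)
    (hCm : MeasurableSet ((1 - lam) • A + lam • B))
    (hsecA : μ₂ {y | ((0:ℝ), y) ∈ A} = ⨆ x : ℝ, μ₂ {y | (x, y) ∈ A})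
    (hsupAB : (⨆ x : ℝ, μ₂ {y | (x, y) ∈ A}) = ⨆ x : ℝ, μ₂ {y | (x, y) ∈ B})
    (hsecB : (⨆ x : ℝ, μ₂ {y | (x, y) ∈ B}) = μ₂ {y | ((0:ℝ), y) ∈ B}) :
    ENNReal.ofReal (1 - lam) * (μ₁.prod μ₂) A + ENNReal.ofReal lam * (μ₁.prod μ₂) B
      ≤ (μ₁.prod μ₂) ((1 - lam) • A + lam • B) := by
  subst hμ₁ hμ₂
  exact statement14_general hφ₁dec (hφ₂conc.quasiConcaveMeasure hm hφ₂meas hq) hlam hAm hBm hsecA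
    hsupAB hsecB

end
end
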